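/- Let n ≥ 1, let V₁,…,V_{n+1} ∈ ℂ^g satisfy Σ_{k=1}^{n+1} V_k = 0, and let W ∈ ℂ^g. For each j = 1,…,n let r_j ∈ ℂ^g and K₁ⱼ, K₂ⱼ, q₁ⱼ, q₂ⱼ ∈ ℂ, and assume the degenerate Fay identity holds for (V_{n+1}, W, r_j, K₁ⱼ, K₂ⱼ) and the bilinear Fay identity holds for (V_{n+1}, V_j, r_j, q₁ⱼ, q₂ⱼ). Let d ∈ ℂ^g and A_j ∈ ℂ∖{0}, and set Z(x,t) = iV_{n+1}x + iWt, E_j = K₁ⱼ, F_j = K₂ⱼ − 2Σ_{k=1}^n q₁ₖ, ψ_j(x,t) = A_j·Θ(Z−d+r_j)/Θ(Z−d)·exp(i(−E_jx + F_jt)), ψ*_j(x,t) = (q₂ⱼ/A_j)·Θ(Z−d−r_j)/Θ(Z−d)·exp(i(E_jx − F_jt)). Then on the open set of (x,t) ∈ ℝ² where Θ(Z(x,t)−d) ≠ 0, for each j = 1,…,n: i∂_tψ_j + ∂_x²ψ_j + 2(Σ_{k=1}^n ψ_kψ*_k)ψ_j = 0 and −i∂_tψ*_j + ∂_x²ψ*_j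 + 2(Σ_{k=1}^n ψ_kψ*_k)ψ*_j = 0 (the complexified multi-component nonlinear Schrödinger system). -/

import Mathlib

open Complex ComplexConjugate

noncomputable section

/-- Bilinear pairing ⟨u,v⟩ = Σ uᵢ vᵢ (no complex conjugation). -/
def pairC {g : ℕ} (u v : Fin g → ℂ) : ℂ := ∑ i, u i * v i

/-- The Riemann theta function with period matrix `B`. -/
def theta {g : ℕ} (B : Matrix (Fin g) (Fin g) ℂ) (z : Fin g → ℂ) : ℂ :=
  ∑' m : Fin g → ℤ,
    Complex.exp ((1 / 2) * pairC (B.mulVec (fun i => (m i : ℂ))) (fun i => (m i : ℂ))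
      + pairC (fun i => (m i : ℂ)) z)

/-- First logarithmic directional derivative `D_V ln F (z) = D_V F(z) / F(z)`. -/
def logD {g : ℕ} (V : Fin g → ℂ) (F : (Fin g → ℂ) → ℂ) (z : Fin g → ℂ) : ℂ :=
  fderiv ℂ F z V / F z

/-- Second logarithmic directional derivative `D_V² ln F (z) = D_V (D_V ln F) (z)`. -/
def logD2 {g : ℕ} (V : Fin g → ℂ) (F : (Fin g → ℂ) → ℂ) (z : Fin g → ℂ) : ℂ :=
  fderiv ℂ (logD V F) z V

/-- The degenerate Fay identity for the data `(V, W, r, K₁, K₂)`. -/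
def DegFay {g : ℕ} (B : Matrix (Fin g) (Fin g) ℂ) (V W r : Fin g → ℂ)
    (K₁ K₂ : ℂ) : Prop :=
  ∀ z : Fin g → ℂ, theta B z ≠ 0 → theta B (z + r) ≠ 0 →
    logD W (fun w => theta B (w + r) / theta B w) z
      + logD2 V (fun w => theta B (w + r) / theta B w) z
      + (logD V (fun w => theta B (w + r) / theta B w) z - K₁) ^ 2
      + 2 * logD2 V (theta B) z + K₂ = 0

/-- The bilinear (degenerate Fay) identity for the data `(V, V', r, q₁, q₂)`. -/
def BilinFay {g : ℕ} (B : Matrix (Fin g) (Fin g) ℂ) (V V' r : Fin g → ℂ)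
    (q₁ q₂ : ℂ) : Prop :=
  ∀ z : Fin g → ℂ, theta B z ≠ 0 →
    fderiv ℂ (logD V' (theta B)) z V
      = q₁ + q₂ * theta B (z + r) * theta B (z - r) / (theta B z) ^ 2

/-- ℓ¹ size of an integer vector. -/
def nOne {g : ℕ} (m : Fin g → ℤ) : ℝ := ∑ i, |(m i : ℝ)|

/-- Rapidly decreasing coefficient families. -/
def Good {g : ℕ} (c : (Fin g → ℤ) → ℂ) : Prop :=
  ∀ R : ℝ, Summable fun m => ‖c m‖ * Real.exp (R * nOne m)

/-- Exponential series with coefficients `c`. -/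
def expS {g : ℕ} (c : (Fin g → ℤ) → ℂ) (z : Fin g → ℂ) : ℂ :=
  ∑' m : Fin g → ℤ, c m * Complex.exp (pairC (fun i => (m i : ℂ)) z)

/-- Pairing with `m` as a continuous linear form. -/
def linM {g : ℕ} (m : Fin g → ℤ) : (Fin g → ℂ) →L[ℂ] ℂ :=
  ∑ i, (m i : ℂ) • ContinuousLinearMap.proj i

lemma linM_apply {g : ℕ} (m : Fin g → ℤ) (z : Fin g → ℂ) :
    linM m z = pairC (fun i => (m i : ℂ)) z := by
  simp [linM, pairC]

lemma nOne_nonneg {g : ℕ} (m : Fin g → ℤ) : 0 ≤ nOne m :=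
  Finset.sum_nonneg fun _ _ => abs_nonneg _

lemma norm_pairC_le {g : ℕ} (m : Fin g → ℤ) (z : Fin g → ℂ) :
    ‖pairC (fun i => (m i : ℂ)) z‖ ≤ nOne m * ‖z‖ := by
  unfold pairC nOne
  rw [Finset.sum_mul]
  refine (norm_sum_le _ _).trans (Finset.sum_le_sum fun i _ => ?_)
  rw [norm_mul, Complex.norm_intCast]
  exact mul_le_mul_of_nonneg_left (norm_le_pi_norm z i) (abs_nonneg _)

lemma norm_linM_le {g : ℕ} (m : Fin g → ℤ) : ‖linM m‖ ≤ nOne m :=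
  ContinuousLinearMap.opNorm_le_bound _ (nOne_nonneg m) fun z => by
    rw [linM_apply]; exact norm_pairC_le m z

lemma norm_exp_pairC_le {g : ℕ} (m : Fin g → ℤ) (z : Fin g → ℂ) (R : ℝ) (h : ‖z‖ ≤ R) :
    ‖Complex.exp (pairC (fun i => (m i : ℂ)) z)‖ ≤ Real.exp (R * nOne m) := by
  rw [Complex.norm_exp]
  refine Real.exp_le_exp.2 ((Complex.re_le_norm _).trans ((norm_pairC_le m z).trans ?_))
  rw [mul_comm]
  exact mul_le_mul_of_nonneg_right h (nOne_nonneg m)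

lemma nOne_le_exp {g : ℕ} (m : Fin g → ℤ) : nOne m ≤ Real.exp (nOne m) := by
  linarith [Real.add_one_le_exp (nOne m)]

lemma Good.shift {g : ℕ} {c : (Fin g → ℤ) → ℂ} (hc : Good c) (r : Fin g → ℂ) :
    Good (fun m => c m * Complex.exp (pairC (fun i => (m i : ℂ)) r)) := by
  intro R
  refine (hc (‖r‖ + R)).of_nonneg_of_le (fun m => by positivity) fun m => ?_
  rw [norm_mul, add_mul, Real.exp_add, mul_assoc]
  gcongr
  exact norm_exp_pairC_le m r _ le_rfl

lemma Good.mul {g : ℕ} {c : (Fin g → ℤ) → ℂ} (hc : Good c) (i : Fin g) :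
    Good (fun m => c m * (m i : ℂ)) := by
  intro R
  refine (hc (1 + R)).of_nonneg_of_le (fun m => by positivity) fun m => ?_
  rw [norm_mul, add_mul, Real.exp_add, mul_assoc, one_mul]
  gcongr
  refine le_trans ?_ (nOne_le_exp m)
  rw [Complex.norm_intCast]
  exact Finset.single_le_sum (f := fun i => |(m i : ℝ)|) (fun _ _ => abs_nonneg _)
    (Finset.mem_univ i)

lemma Good.summable {g : ℕ} {c : (Fin g → ℤ) → ℂ} (hc : Good c) (z : Fin g → ℂ) :
    Summable fun m => c m * Complex.exp (pairC (fun i => (m i : ℂ)) z) := by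
  refine Summable.of_norm_bounded (hc ‖z‖) fun m => ?_
  rw [norm_mul]
  gcongr
  exact norm_exp_pairC_le m z _ le_rfl

lemma Good.hasFDerivAt {g : ℕ} {c : (Fin g → ℤ) → ℂ} (hc : Good c) (z : Fin g → ℂ) :
    HasFDerivAt (expS c)
      (∑ i, expS (fun m => c m * (m i : ℂ)) z •
        (ContinuousLinearMap.proj i : (Fin g → ℂ) →L[ℂ] ℂ)) z := by
  have key := hasFDerivAt_tsum_of_isPreconnected (𝕜 := ℂ)
    (f := fun (m : Fin g → ℤ) z => c m * Complex.exp (pairC (fun i => (m i : ℂ)) z))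
    (f' := fun m z => (c m * Complex.exp (pairC (fun i => (m i : ℂ)) z)) • linM m)
    (s := Metric.ball 0 (‖z‖ + 1)) (x₀ := z) (x := z)
    (hc (1 + (‖z‖ + 1))) Metric.isOpen_ball (convex_ball _ _).isPreconnected
    (fun m y _ => by
      have h1 : HasFDerivAt (fun z => pairC (fun i => (m i : ℂ)) z) (linM m) y := by
        have := (linM m).hasFDerivAt (x := y)
        refine this.congr_of_eventuallyEq (Filter.Eventually.of_forall fun z => ?_)
        exact (linM_apply m z).symm
      have h2 := h1.cexp.const_mul (c m)
      rw [smul_smul] at h2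
      exact h2)
    (fun m y hy => by
      rw [norm_smul, norm_mul, mul_assoc, add_mul, Real.exp_add, one_mul]
      rw [mul_comm (Real.exp (nOne m))]
      have hy' : ‖y‖ ≤ ‖z‖ + 1 := (mem_ball_zero_iff.1 hy).le
      have h1 := norm_exp_pairC_le m y _ hy'
      have h2 := (norm_linM_le m).trans (nOne_le_exp m)
      gcongr)
    (by simp) (hc.summable z) (by simp)
  refine key.congr_fderiv ?_
  have hs : ∀ i, Summable fun m : Fin g → ℤ =>
      (c m * (m i : ℂ) * Complex.exp (pairC (fun i => (m i : ℂ)) z)) •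
        (ContinuousLinearMap.proj i : (Fin g → ℂ) →L[ℂ] ℂ) :=
    fun i => ((hc.mul i).summable z).smul_const _
  have : ∀ m : Fin g → ℤ, (c m * Complex.exp (pairC (fun i => (m i : ℂ)) z)) • linM m
      = ∑ i, (c m * (m i : ℂ) * Complex.exp (pairC (fun i => (m i : ℂ)) z)) •
        (ContinuousLinearMap.proj i : (Fin g → ℂ) →L[ℂ] ℂ) := by
    intro m
    rw [linM, Finset.smul_sum]
    refine Finset.sum_congr rfl fun i _ => ?_
    rw [smul_smul]; congr 1; ring
  refine (tsum_congr this).trans ?_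
  rw [Summable.tsum_finsetSum fun i _ => hs i]
  refine Finset.sum_congr rfl fun i _ => ?_
  exact ((hc.mul i).summable z).tsum_smul_const _

lemma Good.contDiff {g : ℕ} (n : ℕ) : ∀ {c : (Fin g → ℤ) → ℂ}, Good c →
    ContDiff ℂ n (expS c) := by
  induction n with
  | zero =>
    intro c hc
    refine contDiff_zero.2 ?_
    exact continuous_iff_continuousAt.2 fun z => (hc.hasFDerivAt z).continuousAt
  | succ n ih =>
    intro c hc
    push_cast
    refine contDiff_succ_iff_hasFDerivAt.2 ⟨_, ?_, fun z => hc.hasFDerivAt z⟩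
    exact ContDiff.sum fun i _ => (ih (hc.mul i)).smul contDiff_const

/-- Theta coefficients. -/
def thC {g : ℕ} (B : Matrix (Fin g) (Fin g) ℂ) (m : Fin g → ℤ) : ℂ :=
  Complex.exp ((1 / 2) * pairC (B.mulVec (fun i => (m i : ℂ))) (fun i => (m i : ℂ)))

lemma theta_eq {g : ℕ} (B : Matrix (Fin g) (Fin g) ℂ) : theta B = expS (thC B) := by
  funext z
  simp only [theta, expS, thC, Complex.exp_add]

lemma exists_delta {g : ℕ} (M : Fin g → Fin g → ℝ)
    (h : ∀ x : Fin g → ℝ, x ≠ 0 → ∑ i, ∑ j, M i j * x i * x j < 0) :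
    ∃ δ > 0, ∀ x : Fin g → ℝ, ∑ i, ∑ j, M i j * x i * x j ≤ - δ * ∑ i, x i ^ 2 := by
  let q : EuclideanSpace ℝ (Fin g) → ℝ := fun x => ∑ i, ∑ j, M i j * x i * x j
  have hq : Continuous q := by fun_prop
  rcases isEmpty_or_nonempty (Fin g) with he | he
  · exact ⟨1, one_pos, fun x => by simp⟩
  have hcomp : IsCompact (Metric.sphere (0 : EuclideanSpace ℝ (Fin g)) 1) := isCompact_sphere _ _
  have hne : (Metric.sphere (0 : EuclideanSpace ℝ (Fin g)) 1).Nonempty :=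
    NormedSpace.sphere_nonempty.2 zero_le_one
  obtain ⟨y, hy, hmax⟩ := hcomp.exists_isMaxOn hne hq.continuousOn
  have hy1 : ‖y‖ = 1 := by simpa using hy
  have hqy : q y < 0 := h y fun h0 => by
    have : y = 0 := by ext i; exact congrFun h0 i
    rw [this] at hy1; simp at hy1
  refine ⟨-q y, by linarith, fun x => ?_⟩
  rcases eq_or_ne x 0 with rfl | hx
  · simp
  set X : EuclideanSpace ℝ (Fin g) := WithLp.toLp 2 x with hX
  have hX0 : X ≠ 0 := fun h0 => hx (by
    funext i
    have := congrArg (fun w : EuclideanSpace ℝ (Fin g) => w i) h0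
    simpa [hX] using this)
  have hn : 0 < ‖X‖ := norm_pos_iff.2 hX0
  have hmem : ‖X‖⁻¹ • X ∈ Metric.sphere (0 : EuclideanSpace ℝ (Fin g)) 1 := by
    rw [mem_sphere_zero_iff_norm, norm_smul, norm_inv, norm_norm, inv_mul_cancel₀ hn.ne']
  have h1 : q (‖X‖⁻¹ • X) ≤ q y := hmax hmem
  have h2 : q (‖X‖⁻¹ • X) = (‖X‖⁻¹) ^ 2 * ∑ i, ∑ j, M i j * x i * x j := by
    simp only [q, Finset.mul_sum]
    refine Finset.sum_congr rfl fun i _ => Finset.sum_congr rfl fun j _ => ?_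
    simp [hX]; ring
  have h3 : ‖X‖ ^ 2 = ∑ i, x i ^ 2 := by
    rw [EuclideanSpace.real_norm_sq_eq]
  rw [h2] at h1
  rw [← h3, neg_neg]
  have h4 := mul_le_mul_of_nonneg_right h1 (sq_nonneg ‖X‖)
  have h5 : (‖X‖⁻¹) ^ 2 * (∑ i, ∑ j, M i j * x i * x j) * ‖X‖ ^ 2
    = ∑ i, ∑ j, M i j * x i * x j := by
    field_simp
  linarith

lemma summable_pi {g : ℕ} (f : ℤ → ℝ) (hf : ∀ k, 0 ≤ f k) (hs : Summable f) :
    Summable fun m : Fin g → ℤ => ∏ i, f (m i) := by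
  refine summable_of_sum_le (c := ∏ _i : Fin g, ∑' k, f k)
    (fun m => Finset.prod_nonneg fun i _ => hf _) fun u => ?_
  have hsub : u ⊆ Fintype.piFinset fun i => u.image fun m => m i := by
    intro m hm
    rw [Fintype.mem_piFinset]
    exact fun i => Finset.mem_image_of_mem _ hm
  refine (Finset.sum_le_sum_of_subset_of_nonneg hsub
    fun m _ _ => Finset.prod_nonneg fun i _ => hf _).trans ?_
  rw [← Finset.prod_univ_sum (fun i => u.image fun m => m i) (fun _ k => f k)]
  exact Finset.prod_le_prod (fun i _ => Finset.sum_nonneg fun k _ => hf k)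
    fun i _ => hs.sum_le_tsum _ fun k _ => hf k

lemma summable_gauss (δ R : ℝ) (hδ : 0 < δ) :
    Summable fun k : ℤ => Real.exp (-δ * (k : ℝ) ^ 2 + R * |(k : ℝ)|) := by
  have h0 : Summable fun k : ℤ => Real.exp (-|(k : ℝ)|) := by
    refine Summable.of_nat_of_neg ?_ ?_ <;> simpa using Real.summable_exp_neg_nat
  refine (h0.mul_left (Real.exp ((R + 1) ^ 2 / (4 * δ)))).of_nonneg_of_le
    (fun k => (Real.exp_pos _).le) fun k => ?_
  rw [← Real.exp_add]
  refine Real.exp_le_exp.2 ?_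
  have h1 : (R + 1) ^ 2 / (4 * δ) + -|(k : ℝ)| - (-δ * (k : ℝ) ^ 2 + R * |(k : ℝ)|)
      = δ * (|(k : ℝ)| - (R + 1) / (2 * δ)) ^ 2 := by
    rw [← sq_abs (k : ℝ)]
    field_simp
    ring
  have h2 : 0 ≤ δ * (|(k : ℝ)| - (R + 1) / (2 * δ)) ^ 2 := by positivity
  linarith

lemma good_thC {g : ℕ} (B : Matrix (Fin g) (Fin g) ℂ)
    (hBneg : ∀ x : Fin g → ℝ, x ≠ 0 → ∑ i, ∑ j, (B i j).re * x i * x j < 0) :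
    Good (thC B) := by
  obtain ⟨δ, hδ, hb⟩ := exists_delta (fun i j => (B i j).re) hBneg
  intro R
  refine (summable_pi _ (fun k => (Real.exp_pos _).le)
    (summable_gauss (δ / 2) R (by positivity))).of_nonneg_of_le (fun m => by positivity)
    fun m => ?_
  rw [← Real.exp_sum, thC, Complex.norm_exp, ← Real.exp_add]
  refine Real.exp_le_exp.2 ?_
  have h1 := hb fun i => (m i : ℝ)
  have h2 : ((1 / 2 : ℂ) * pairC (B.mulVec (fun i => (m i : ℂ))) (fun i => (m i : ℂ))).re
      = (1 / 2) * ∑ i, ∑ j, (B i j).re * m i * m j := by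
    have : (1 / 2 : ℂ) = ((1 / 2 : ℝ) : ℂ) := by norm_num
    rw [this, Complex.re_ofReal_mul]
    congr 1
    simp only [pairC, Matrix.mulVec, dotProduct, Complex.re_sum, Finset.sum_mul]
    refine Finset.sum_congr rfl fun i _ => Finset.sum_congr rfl fun j _ => ?_
    simp
    ring
  rw [h2, Finset.sum_add_distrib, ← Finset.mul_sum, ← Finset.mul_sum, nOne]
  linarith

lemma theta_contDiff {g : ℕ} (B : Matrix (Fin g) (Fin g) ℂ)
    (hBneg : ∀ x : Fin g → ℝ, x ≠ 0 → ∑ i, ∑ j, (B i j).re * x i * x j < 0) (n : ℕ) :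
    ContDiff ℂ n (theta B) := by
  rw [theta_eq]; exact (good_thC B hBneg).contDiff n

lemma theta_even {g : ℕ} (B : Matrix (Fin g) (Fin g) ℂ) (z : Fin g → ℂ) :
    theta B (-z) = theta B z := by
  unfold theta
  rw [← (Equiv.neg (Fin g → ℤ)).tsum_eq]
  refine tsum_congr fun m => ?_
  have h : (fun i => (((Equiv.neg (Fin g → ℤ)) m i : ℤ) : ℂ)) = -fun i => (m i : ℂ) := by
    funext i; simp
  rw [h, Matrix.mulVec_neg]
  simp [pairC]

lemma fderiv_neg_comp {g : ℕ} (F : (Fin g → ℂ) → ℂ) (z : Fin g → ℂ) :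
    fderiv ℂ (fun w => F (-w)) z = -fderiv ℂ F (-z) := by
  have := fderiv_comp_smul (𝕜 := ℂ) (f := F) (x := z) (-1)
  simpa using this

lemma logD_neg {g : ℕ} (V : Fin g → ℂ) (F : (Fin g → ℂ) → ℂ) :
    logD (-V) (fun w => F (-w)) = fun z => logD V F (-z) := by
  funext z
  simp [logD, fderiv_neg_comp]

lemma logD2_neg {g : ℕ} (V : Fin g → ℂ) (F : (Fin g → ℂ) → ℂ) (z : Fin g → ℂ) :
    logD2 (-V) (fun w => F (-w)) z = logD2 V F (-z) := by
  simp [logD2, logD_neg, fderiv_neg_comp]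

lemma DegFay.neg {g : ℕ} {B : Matrix (Fin g) (Fin g) ℂ} {V W r : Fin g → ℂ} {K₁ K₂ : ℂ}
    (h : DegFay B V W r K₁ K₂) : DegFay B (-V) (-W) (-r) K₁ K₂ := by
  intro z h1 h2
  have e1 : (fun w => theta B (w + -r) / theta B w)
      = fun w => (fun y => theta B (y + r) / theta B y) (-w) := by
    funext w
    simp only [theta_even]
    rw [← theta_even B (w + -r)]
    congr 2; abel
  have e2 : theta B = fun w => theta B (-w) := by
    funext w; rw [theta_even]
  have h' := h (-z) (by rwa [theta_even]) (by
    rw [← theta_even B (z + -r)] at h2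
    convert h2 using 2; abel)
  have f1 : ∀ U, logD (-U) (fun w => (fun y => theta B (y + r) / theta B y) (-w)) z
      = logD U (fun y => theta B (y + r) / theta B y) (-z) :=
    fun U => congrFun (logD_neg U (fun y => theta B (y + r) / theta B y)) z
  have f2 : logD2 (-V) (fun w => (fun y => theta B (y + r) / theta B y) (-w)) z
      = logD2 V (fun y => theta B (y + r) / theta B y) (-z) :=
    logD2_neg V (fun y => theta B (y + r) / theta B y) z
  rw [e1, f1, f2, f1]
  have e3 : logD2 (-V) (theta B) z = logD2 V (theta B) (-z) := by
    conv_lhs => rw [e2]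
    exact logD2_neg V (theta B) z
  rw [e3]
  exact h'

lemma theta_dense {g : ℕ} (B : Matrix (Fin g) (Fin g) ℂ) (hc : Differentiable ℂ (theta B))
    (z0 : Fin g → ℂ) (h0 : theta B z0 ≠ 0) (p : Fin g → ℂ) :
    ∃ᶠ w in nhds p, theta B w ≠ 0 := by
  intro hev
  simp only [not_not] at hev
  apply h0
  let l : ℂ → Fin g → ℂ := fun s => p + s • (z0 - p)
  have hl : Differentiable ℂ l := by fun_prop
  have hh : AnalyticOnNhd ℂ (fun s => theta B (l s)) Set.univ :=
    (hc.comp hl).differentiableOn.analyticOnNhd isOpen_univ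
  have hz : ∀ᶠ s in nhds (0 : ℂ), theta B (l s) = 0 := by
    have : Filter.Tendsto l (nhds 0) (nhds p) := by
      have := hl.continuous.tendsto 0
      simpa [l] using this
    exact this.eventually hev
  have := hh.eqOn_zero_of_preconnected_of_eventuallyEq_zero isPreconnected_univ
    (Set.mem_univ 0) hz (Set.mem_univ 1)
  simpa [l] using this

lemma key_lin {g : ℕ} (B : Matrix (Fin g) (Fin g) ℂ) (hc : ContDiff ℂ 3 (theta B))
    {V W r : Fin g → ℂ} {K₁ K₂ : ℂ} (h : DegFay B V W r K₁ K₂)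
    (f : (Fin g → ℂ) → ℂ) (hf : f = fun w => theta B (w + r) / theta B w)
    (p : Fin g → ℂ) (hp : theta B p ≠ 0) :
    fderiv ℂ f p W + fderiv ℂ (fun y => fderiv ℂ f y V) p V - 2 * K₁ * fderiv ℂ f p V
      + (K₁ ^ 2 + 2 * logD2 V (theta B) p + K₂) * f p = 0 := by
  have hcd : ∀ w, theta B w ≠ 0 → ContDiffAt ℂ 3 f w := by
    intro w hw
    rw [hf]
    exact ((hc.comp (contDiff_id.add contDiff_const)).contDiffAt).div hc.contDiffAt hw
  have hD : ∀ U w, theta B w ≠ 0 → ContDiffAt ℂ 2 (fun y => fderiv ℂ f y U) w := by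
    intro U w hw
    exact ((hcd w hw).fderiv_right (m := 2) (by norm_num)).clm_apply contDiffAt_const
  have hDD : ∀ w, theta B w ≠ 0 →
      ContDiffAt ℂ 1 (fun x => fderiv ℂ (fun y => fderiv ℂ f y V) x V) w := by
    intro w hw
    exact ((hD V w hw).fderiv_right (m := 1) (by norm_num)).clm_apply contDiffAt_const
  have hL : ∀ w, theta B w ≠ 0 → ContinuousAt (logD2 V (theta B)) w := by
    intro w hw
    have h1 : ContDiffAt ℂ 1 (logD V (theta B)) w :=
      ((hc.contDiffAt.fderiv_right (m := 1) (by norm_num)).clm_apply contDiffAt_const).div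
        (hc.contDiffAt.of_le (by norm_num)) hw
    exact ((h1.fderiv_right (m := 0) (by norm_num)).clm_apply contDiffAt_const).continuousAt
  set G : (Fin g → ℂ) → ℂ := fun p =>
    fderiv ℂ f p W + fderiv ℂ (fun y => fderiv ℂ f y V) p V - 2 * K₁ * fderiv ℂ f p V
      + (K₁ ^ 2 + 2 * logD2 V (theta B) p + K₂) * f p with hG
  have hGc : ContinuousAt G p := by
    have a1 := (hD W p hp).continuousAt
    have a2 := (hDD p hp).continuousAt
    have a3 := (hD V p hp).continuousAt
    have a4 := hL p hp
    have a5 := (hcd p hp).continuousAt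
    exact ((a1.add a2).sub (a3.const_mul (2 * K₁))).add
      (((continuousAt_const.add (a4.const_mul 2)).add continuousAt_const).mul a5)
  have hG0 : ∀ w, theta B w ≠ 0 → theta B (w + r) ≠ 0 → G w = 0 := by
    intro w h1 h2
    have hw := h w h1 h2
    rw [← hf] at hw
    have hfw : f w ≠ 0 := by rw [hf]; exact div_ne_zero h2 h1
    have e1 : logD2 V f w
        = (fderiv ℂ (fun y => fderiv ℂ f y V) w V * f w - fderiv ℂ f w V * fderiv ℂ f w V)
          / f w ^ 2 := by
      have d1 := ((hD V w h1).differentiableAt (by norm_num)).hasFDerivAt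
      have d2 := ((hcd w h1).differentiableAt (by norm_num)).hasFDerivAt
      have d3 := (d1.mul ((hasDerivAt_inv hfw).comp_hasFDerivAt w d2)).fderiv
      have : logD V f = (fun y => fderiv ℂ f y V) * ((fun y => y⁻¹) ∘ f) := by
        funext y; simp [logD, div_eq_mul_inv]
      rw [logD2, this, d3]
      simp
      field_simp
      ring
    rw [e1] at hw
    simp only [logD] at hw
    simp only [hG]
    have e2 : fderiv ℂ f w W + fderiv ℂ (fun y => fderiv ℂ f y V) w V - 2 * K₁ * fderiv ℂ f w V
      + (K₁ ^ 2 + 2 * logD2 V (theta B) w + K₂) * f w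
      = f w * (fderiv ℂ f w W / f w +
        (fderiv ℂ (fun y => fderiv ℂ f y V) w V * f w - fderiv ℂ f w V * fderiv ℂ f w V) / f w ^ 2
        + (fderiv ℂ f w V / f w - K₁) ^ 2 + 2 * logD2 V (theta B) w + K₂) := by
      field_simp
      ring
    rw [e2, hw, mul_zero]
  by_contra hne
  have ev1 : ∀ᶠ w in nhds p, G w ≠ 0 := hGc.eventually_ne hne
  have ev2 : ∀ᶠ w in nhds p, theta B w ≠ 0 := hc.continuous.continuousAt.eventually_ne hp
  have fr := theta_dense B (hc.differentiable (by norm_num)) p hp (p + r)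
  have fr' : ∃ᶠ w in nhds p, theta B (w + r) ≠ 0 := by
    intro hev
    apply fr
    have ht : Filter.Tendsto (fun w : Fin g → ℂ => w - r) (nhds (p + r)) (nhds p) := by
      have : Continuous fun w : Fin g → ℂ => w - r := by fun_prop
      simpa using this.tendsto (p + r)
    simpa using ht.eventually hev
  obtain ⟨w, hw1, hw2, hw3⟩ := (fr'.and_eventually (ev1.and ev2)).exists
  exact hw2 (hG0 w hw3 hw1)

lemma line_deriv {g : ℕ} (f : (Fin g → ℂ) → ℂ) (a α β : ℂ) (V b : Fin g → ℂ) (x : ℝ)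
    (hf : DifferentiableAt ℂ f ((x : ℂ) • (I • V) + b)) :
    HasDerivAt (fun x : ℝ => a * f ((x : ℂ) • (I • V) + b) * Complex.exp (I * (α * x + β)))
      (a * (I * fderiv ℂ f ((x : ℂ) • (I • V) + b) V + I * α * f ((x : ℂ) • (I • V) + b))
        * Complex.exp (I * (α * x + β))) x := by
  have key : HasDerivAt (fun x : ℂ => a * f (x • (I • V) + b) * Complex.exp (I * (α * x + β)))
      (a * (I * fderiv ℂ f ((x : ℂ) • (I • V) + b) V + I * α * f ((x : ℂ) • (I • V) + b))
        * Complex.exp (I * (α * x + β))) (x : ℂ) := by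
    have h1 : HasDerivAt (fun x : ℂ => x • (I • V) + b) (I • V) (x : ℂ) := by
      simpa using ((hasDerivAt_id (x : ℂ)).smul_const (I • V)).add_const b
    have h2 := (hf.hasFDerivAt.comp_hasDerivAt (x : ℂ) h1).const_mul a
    have h3 : HasDerivAt (fun x : ℂ => Complex.exp (I * (α * x + β)))
        (Complex.exp (I * (α * x + β)) * (I * α)) (x : ℂ) := by
      have := ((((hasDerivAt_id (x : ℂ)).const_mul α).add_const β).const_mul I).cexp
      simpa using this
    refine (h2.mul h3).congr_deriv ?_
    simp only [map_smul, smul_eq_mul, Function.comp]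
    ring
  exact key.comp_ofReal

/-- Evolution of a plane-wave modulated function. -/
lemma evol {g : ℕ} (f : (Fin g → ℂ) → ℂ) (a E F : ℂ) (V W d : Fin g → ℂ) (x t : ℝ)
    (hf : ContDiffAt ℂ 2 f (((x : ℂ) • (I • V) + (t : ℂ) • (I • W)) - d))
    (φ : ℝ → ℝ → ℂ)
    (hφ : ∀ x t : ℝ, φ x t = a * f (((x : ℂ) • (I • V) + (t : ℂ) • (I • W)) - d)
      * Complex.exp (I * (E * x + F * t))) :
    deriv (fun t' => φ x t') t
      = a * (I * fderiv ℂ f (((x : ℂ) • (I • V) + (t : ℂ) • (I • W)) - d) W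
        + I * F * f (((x : ℂ) • (I • V) + (t : ℂ) • (I • W)) - d))
        * Complex.exp (I * (E * x + F * t)) ∧
    deriv (fun x' => deriv (fun x'' => φ x'' t) x') x
      = -a * (fderiv ℂ (fun y => fderiv ℂ f y V)
            (((x : ℂ) • (I • V) + (t : ℂ) • (I • W)) - d) V
          + 2 * E * fderiv ℂ f (((x : ℂ) • (I • V) + (t : ℂ) • (I • W)) - d) V
          + E ^ 2 * f (((x : ℂ) • (I • V) + (t : ℂ) • (I • W)) - d))
        * Complex.exp (I * (E * x + F * t)) := by
  constructor
  · have e : ∀ s : ℝ, ((x : ℂ) • (I • V) + (s : ℂ) • (I • W)) - d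
        = (s : ℂ) • (I • W) + ((x : ℂ) • (I • V) - d) := fun s => by abel
    simp only [hφ, e]
    have h := line_deriv f a F (E * x) W ((x : ℂ) • (I • V) - d) t
      (by rw [← e]; exact hf.differentiableAt (by norm_num))
    simp only [add_comm (F * _) (E * _)] at h
    exact h.deriv
  · have e : ∀ s : ℝ, ((s : ℂ) • (I • V) + (t : ℂ) • (I • W)) - d
        = (s : ℂ) • (I • V) + ((t : ℂ) • (I • W) - d) := fun s => by abel
    simp only [hφ, e]
    rw [e] at hf
    set b := (t : ℂ) • (I • W) - d
    have hev : ∀ᶠ s : ℝ in nhds x, ContDiffAt ℂ 2 f ((s : ℂ) • (I • V) + b) := by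
      have hcont : Continuous fun s : ℝ => (s : ℂ) • (I • V) + b := by fun_prop
      exact hcont.continuousAt.eventually (hf.eventually (by simp))
    have hd1 : (fun x' : ℝ => deriv (fun x'' : ℝ => a * f ((x'' : ℂ) • (I • V) + b)
        * Complex.exp (I * (E * x'' + F * t))) x') =ᶠ[nhds x]
        fun x' : ℝ => a * (fun y => I * fderiv ℂ f y V + I * E * f y) ((x' : ℂ) • (I • V) + b)
        * Complex.exp (I * (E * x' + F * t)) := by
      filter_upwards [hev] with s hs
      exact (line_deriv f a E (F * t) V b s (hs.differentiableAt (by norm_num))).deriv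
    rw [hd1.deriv_eq]
    have c1 : DifferentiableAt ℂ (fun y => fderiv ℂ f y V) ((x : ℂ) • (I • V) + b) :=
      ((hf.fderiv_right (m := 1) (by norm_num)).clm_apply contDiffAt_const).differentiableAt
        (by norm_num)
    have c0 : DifferentiableAt ℂ f ((x : ℂ) • (I • V) + b) := hf.differentiableAt (by norm_num)
    have hf1 := (c1.hasFDerivAt.const_mul I).add (c0.hasFDerivAt.const_mul (I * E))
    have h := line_deriv (fun y => I * fderiv ℂ f y V + I * E * f y) a E (F * t) V b x
      hf1.differentiableAt
    rw [h.deriv]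
    have hfd : fderiv ℂ (fun y => I * fderiv ℂ f y V + I * E * f y) ((x : ℂ) • (I • V) + b) = _ :=
      hf1.fderiv
    rw [hfd]
    simp only [add_apply, smul_apply, smul_eq_mul]
    ring_nf
    simp only [Complex.I_sq]
    ring

lemma sum_identity {g n : ℕ} (B : Matrix (Fin g) (Fin g) ℂ) (hc : ContDiff ℂ 3 (theta B))
    (V : Fin (n + 1) → Fin g → ℂ) (hV : ∑ k, V k = 0)
    (r : Fin n → Fin g → ℂ) (q₁ q₂ : Fin n → ℂ)
    (hBF : ∀ j : Fin n, BilinFay B (V (Fin.last n)) (V j.castSucc) (r j) (q₁ j) (q₂ j))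
    (z : Fin g → ℂ) (hz : theta B z ≠ 0) :
    ∑ k, q₂ k * theta B (z + r k) * theta B (z - r k) / theta B z ^ 2
      = - logD2 (V (Fin.last n)) (theta B) z - ∑ k, q₁ k := by
  have hdiff : ∀ U, DifferentiableAt ℂ (logD U (theta B)) z := by
    intro U
    have h1 : ContDiffAt ℂ 1 (logD U (theta B)) z :=
      ((hc.contDiffAt.fderiv_right (m := 1) (by norm_num)).clm_apply contDiffAt_const).div
        (hc.contDiffAt.of_le (by norm_num)) hz
    exact h1.differentiableAt (by norm_num)
  have hlin : (fun y => ∑ k, logD (V k) (theta B) y) = fun _ => 0 := by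
    funext y
    simp only [logD]
    rw [← Finset.sum_div, ← map_sum, hV]
    simp
  have h0 : ∑ k, fderiv ℂ (logD (V k) (theta B)) z = 0 := by
    rw [← fderiv_fun_sum (fun k _ => hdiff (V k)), hlin]
    simp
  have h1 := congrArg (fun L : (Fin g → ℂ) →L[ℂ] ℂ => L (V (Fin.last n))) h0
  simp only [Fin.sum_univ_castSucc] at h1
  simp only [add_apply, sum_apply] at h1
  have h2 : ∀ k : Fin n, q₂ k * theta B (z + r k) * theta B (z - r k) / theta B z ^ 2
      = fderiv ℂ (logD (V k.castSucc) (theta B)) z (V (Fin.last n)) - q₁ k := by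
    intro k
    rw [hBF k z hz]; ring
  rw [Finset.sum_congr rfl fun k _ => h2 k, Finset.sum_sub_distrib, logD2]
  have h3 : ((0 : (Fin g → ℂ) →L[ℂ] ℂ)) (V (Fin.last n)) = 0 := rfl
  rw [h3] at h1
  linear_combination h1

/-- theta-functional solutions of the complexified multi-component
nonlinear Schrödinger system. -/
theorem stmt_8 {g n : ℕ} (hg : 1 ≤ g) (hn : 1 ≤ n) (B : Matrix (Fin g) (Fin g) ℂ)
    (hBsymm : B.IsSymm)
    (hBneg : ∀ x : Fin g → ℝ, x ≠ 0 → ∑ i, ∑ j, (B i j).re * x i * x j < 0)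
    (V : Fin (n + 1) → Fin g → ℂ) (hV : ∑ k, V k = 0) (W : Fin g → ℂ)
    (r : Fin n → Fin g → ℂ) (K₁ K₂ q₁ q₂ : Fin n → ℂ)
    (hDF : ∀ j : Fin n, DegFay B (V (Fin.last n)) W (r j) (K₁ j) (K₂ j))
    (hBF : ∀ j : Fin n, BilinFay B (V (Fin.last n)) (V j.castSucc) (r j) (q₁ j) (q₂ j))
    (d : Fin g → ℂ) (A : Fin n → ℂ) (hA : ∀ j, A j ≠ 0)
    (Z : ℝ → ℝ → Fin g → ℂ)
    (hZ : ∀ x t : ℝ, Z x t = fun i => I * V (Fin.last n) i * (x : ℂ) + I * W i * (t : ℂ))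
    (E F : Fin n → ℂ) (hE : ∀ j, E j = K₁ j)
    (hF : ∀ j, F j = K₂ j - 2 * ∑ k, q₁ k)
    (ψ ψs : Fin n → ℝ → ℝ → ℂ)
    (hψ : ∀ (j : Fin n) (x t : ℝ), ψ j x t =
      A j * theta B (Z x t - d + r j) / theta B (Z x t - d) *
        Complex.exp (I * (-(E j * (x : ℂ)) + F j * (t : ℂ))))
    (hψs : ∀ (j : Fin n) (x t : ℝ), ψs j x t =
      (q₂ j / A j) * theta B (Z x t - d - r j) / theta B (Z x t - d) *
        Complex.exp (I * (E j * (x : ℂ) - F j * (t : ℂ)))) :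
    ∀ x t : ℝ, theta B (Z x t - d) ≠ 0 → ∀ j : Fin n,
      (I * deriv (fun t' : ℝ => ψ j x t') t
        + deriv (fun x' : ℝ => deriv (fun x'' : ℝ => ψ j x'' t) x') x
        + 2 * (∑ k, ψ k x t * ψs k x t) * ψ j x t = 0) ∧
      (-I * deriv (fun t' : ℝ => ψs j x t') t
        + deriv (fun x' : ℝ => deriv (fun x'' : ℝ => ψs j x'' t) x') x
        + 2 * (∑ k, ψ k x t * ψs k x t) * ψs j x t = 0) := by
  intro x t hz j
  have hc : ContDiff ℂ 3 (theta B) := theta_contDiff B hBneg 3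
  set V0 := V (Fin.last n) with hV0
  have hZ' : ∀ x t : ℝ, Z x t = (x : ℂ) • (I • V0) + (t : ℂ) • (I • W) := by
    intro x t
    rw [hZ]
    funext i
    simp
    ring
  have hsum : ∑ k, ψ k x t * ψs k x t
      = - logD2 V0 (theta B) (Z x t - d) - ∑ k, q₁ k := by
    rw [← sum_identity B hc V hV r q₁ q₂ hBF _ hz]
    refine Finset.sum_congr rfl fun k _ => ?_
    rw [hψ, hψs]
    have he : Complex.exp (I * (-(E k * (x : ℂ)) + F k * (t : ℂ)))
        * Complex.exp (I * (E k * (x : ℂ) - F k * (t : ℂ))) = 1 := by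
      rw [← Complex.exp_add, ← Complex.exp_zero]; congr 1; ring
    have hAk := hA k
    calc _ = (A k * theta B (Z x t - d + r k) / theta B (Z x t - d))
            * ((q₂ k / A k) * theta B (Z x t - d - r k) / theta B (Z x t - d))
            * (Complex.exp (I * (-(E k * (x : ℂ)) + F k * (t : ℂ)))
              * Complex.exp (I * (E k * (x : ℂ) - F k * (t : ℂ)))) := by ring
      _ = _ := by rw [he]; field_simp
  rw [hsum]
  have hcdf : ∀ s : Fin g → ℂ,
      ContDiffAt ℂ 2 (fun w => theta B (w + s) / theta B w) (Z x t - d) := fun s =>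
    (((hc.comp (contDiff_id.add contDiff_const)).contDiffAt).div hc.contDiffAt hz).of_le
      (by norm_num)
  constructor
  · obtain ⟨f, hf⟩ : ∃ f, f = fun w => theta B (w + r j) / theta B w := ⟨_, rfl⟩
    have k1 := key_lin B hc (hDF j) f hf _ hz
    have hev := evol f (A j) (-E j) (F j) V0 W d x t
      (by rw [← hZ', hf]; exact hcdf _) (ψ j) (by
        intro x t
        rw [hψ, hf, hZ', neg_mul]
        ring)
    rw [hev.1, hev.2]
    have hp : ψ j x t = A j * f (Z x t - d) * Complex.exp (I * (-E j * x + F j * t)) := by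
      rw [hψ, hf, neg_mul]; ring
    rw [hp, ← hZ']
    rw [hE, hF]
    linear_combination (-(A j) * Complex.exp (I * (-K₁ j * x + (K₂ j - 2 * ∑ k, q₁ k) * t))) * k1
      + (A j * Complex.exp (I * (-K₁ j * x + (K₂ j - 2 * ∑ k, q₁ k) * t))) *
        (fderiv ℂ f (Z x t - d) W + (K₂ j - 2 * ∑ k, q₁ k) * f (Z x t - d)) * Complex.I_sq
  · obtain ⟨f, hf⟩ : ∃ f, f = fun w => theta B (w + -r j) / theta B w := ⟨_, rfl⟩
    have k1 := key_lin B hc (hDF j).neg f hf _ hz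
    have hL : logD2 (-V0) (theta B) (Z x t - d) = logD2 V0 (theta B) (Z x t - d) := by
      have : logD (-V0) (theta B) = fun y => - logD V0 (theta B) y := by
        funext y; simp [logD, neg_div]
      rw [logD2, this, fderiv_fun_neg]
      simp [logD2]
    have hD2 : fderiv ℂ (fun y => fderiv ℂ f y (-V0)) (Z x t - d) (-V0)
        = fderiv ℂ (fun y => fderiv ℂ f y V0) (Z x t - d) V0 := by
      simp only [map_neg]
      rw [fderiv_fun_neg]
      simp
    rw [hL, hD2, map_neg, map_neg] at k1
    have hev := evol f (q₂ j / A j) (E j) (-F j) V0 W d x t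
      (by rw [← hZ', hf]; exact hcdf _) (ψs j) (by
        intro x t
        rw [hψs, hf, hZ', neg_mul, sub_eq_add_neg _ (r j), sub_eq_add_neg (E j * _)]
        ring)
    rw [hev.1, hev.2]
    have hp : ψs j x t
        = (q₂ j / A j) * f (Z x t - d) * Complex.exp (I * (E j * x + -F j * t)) := by
      rw [hψs, hf, neg_mul, sub_eq_add_neg _ (r j), sub_eq_add_neg (E j * _)]; ring
    rw [hp, ← hZ']
    rw [hE, hF]
    generalize q₂ j / A j = a
    linear_combination (-a * Complex.exp (I * (K₁ j * x + -(K₂ j - 2 * ∑ k, q₁ k) * t))) * k1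
      - (a * Complex.exp (I * (K₁ j * x + -(K₂ j - 2 * ∑ k, q₁ k) * t))) *
        (fderiv ℂ f (Z x t - d) W - (K₂ j - 2 * ∑ k, q₁ k) * f (Z x t - d)) * Complex.I_sq
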